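/- Fix integers 0 ≤ k₀ ≤ k₁ and let 𝒯 be the finite-dimensional real inner product space of tuples x = (x_{k,j})_{k₀ ≤ k ≤ k₁, 1 ≤ j ≤ 2^k} with weighted inner product ⟨x,y⟩_w := Σ_{k=k₀}^{k₁} 2^{-k} Σ_{j=1}^{2^k} x_{k,j} y_{k,j}. Let Z(t) ∈ 𝒯 denote the tuple (Z_{k,j}(t)). Then Z is isotropic: for every v ∈ 𝒯, ∫₀¹ ⟨v, Z(t)⟩_w² dt = ⟨v, v⟩_w. -/

import Mathlib

/-!
On its dyadic interval, `X_{k,j}` is the tent function (`Xfn_eq`), so `Z_{k,j}` is a rescaled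
translate of one profile `1/2 - |2s - 1|` on `[0,1]` (`Zfn_eq`). The profile is symmetric about
`1/2` and has mean zero, hence is orthogonal to every affine function (`integral_affine_mul`), and
its square integrates to `1/12`.

Isotropy amounts to the Gram matrix of the `Z_{k,j}` being diagonal with entries `2^k`
(`integral_Zfn_mul`). On a common level, distinct intervals overlap in at most a point. On
different levels, the coarser function is affine in the interior of the finer interval
(`profileFn_affine`), so it pairs to zero with the finer one. The diagonal entries are
`4^k · 12 · 2^{-k} / 12 = 2^k`.
-/

open MeasureTheory Set
open scoped ENNReal

/-- The `L_∞`-normalized Haar function `h_{k,j}`. -/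
noncomputable def haarFn (k j : ℕ) : ℝ → ℝ := fun x =>
  if ((j:ℝ) - 1) / 2 ^ k ≤ x ∧ x < ((j:ℝ) - 1/2) / 2 ^ k then 1
  else if ((j:ℝ) - 1/2) / 2 ^ k ≤ x ∧ x < (j:ℝ) / 2 ^ k then -1
  else 0

/-- The Fourier–Haar coefficient `c_{k,j}(f) = 2^k ∫₀¹ f h_{k,j}`. -/
noncomputable def haarCoeff (k j : ℕ) (f : ℝ → ℝ) : ℝ :=
  2 ^ k * ∫ x in (0:ℝ)..1, f x * haarFn k j x

/-- The step function `χ_t`: equals `1` on `[0,t)` and `-1` on `[t,1]`. -/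
noncomputable def chiStep (t : ℝ) : ℝ → ℝ := fun x => if x < t then 1 else -1

/-- `X_{k,j}(t) := c_{k,j}(χ_t)`. -/
noncomputable def Xfn (k j : ℕ) (t : ℝ) : ℝ := haarCoeff k j (chiStep t)

/-- `Z_{k,j}(t) := 2^k · √12 · (X_{k,j}(t) - 1/2)` for
`t ∈ [(j-1)·2^{-k}, j·2^{-k}]`, and `0` otherwise. -/
noncomputable def Zfn (k j : ℕ) (t : ℝ) : ℝ :=
  if ((j:ℝ) - 1) / 2 ^ k ≤ t ∧ t ≤ (j:ℝ) / 2 ^ k then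
    2 ^ k * Real.sqrt 12 * (Xfn k j t - 1/2)
  else 0

/-- The weighted pairing `⟨x,y⟩_w = Σ_{k=k₀}^{k₁} 2^{-k} Σ_{j=1}^{2^k} x_{k,j} y_{k,j}`
on tuples indexed by `k₀ ≤ k ≤ k₁`, `1 ≤ j ≤ 2^k` (modelled as functions `ℕ → ℕ → ℝ`,
only the components in the index range matter). -/
noncomputable def innerW (k₀ k₁ : ℕ) (x y : ℕ → ℕ → ℝ) : ℝ :=
  ∑ k ∈ Finset.Icc k₀ k₁, ((2:ℝ) ^ k)⁻¹ * ∑ j ∈ Finset.Icc 1 (2 ^ k), x k j * y k j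

/-- The mean-zero tent `1/2 - |2s - 1|` on `[0,1]`, extended by `0`; every `Z_{k,j}` is a
rescaled translate of it (`Zfn_eq`). -/
noncomputable def profileFn (s : ℝ) : ℝ :=
  (Icc (0:ℝ) 1).indicator (fun s => 1/2 - |2 * s - 1|) s

lemma integral_indicator_Ico_one {a b : ℝ} (ha : 0 ≤ a) (hab : a ≤ b) (hb : b ≤ 1) :
    ∫ x in (0:ℝ)..1, (Ico a b).indicator (fun _ => (1:ℝ)) x = b - a := by
  rw [intervalIntegral.integral_of_le zero_le_one, ← integral_Icc_eq_integral_Ioc,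
    setIntegral_indicator measurableSet_Ico,
    inter_eq_right.mpr (show Ico a b ⊆ Icc 0 1 from
      fun x hx => ⟨ha.trans hx.1, hx.2.le.trans hb⟩)]
  simp [hab]

lemma intervalIntegrable_indicator_Ico_one (a b : ℝ) :
    IntervalIntegrable ((Ico a b).indicator (fun _ => (1:ℝ))) volume 0 1 := by
  rw [intervalIntegrable_iff, uIoc_of_le zero_le_one]
  exact (integrable_const (1:ℝ)).indicator measurableSet_Ico

/-- Writing `C` for the midpoint of the dyadic interval, the integrand `χ_t · h_{k,j}` is a signed
sum of indicators of intervals with endpoints among the ends, `C`, `min t C` and `max t C`. -/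
lemma Xfn_eq {k j : ℕ} (h1 : 1 ≤ j) (hj : j ≤ 2 ^ k) {t : ℝ}
    (ht1 : ((j:ℝ) - 1) / 2 ^ k ≤ t) (ht2 : t ≤ (j:ℝ) / 2 ^ k) :
    Xfn k j t = 1 - |2 * (2 ^ k * t - (j - 1)) - 1| := by
  have hp : (0:ℝ) < 2 ^ k := by positivity
  have h1' : (1:ℝ) ≤ j := by exact_mod_cast h1
  have hj' : (j:ℝ) ≤ 2 ^ k := by exact_mod_cast hj
  have hA : 0 ≤ ((j:ℝ) - 1) / 2 ^ k := div_nonneg (by linarith) hp.le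
  have hB : (j:ℝ) / 2 ^ k ≤ 1 := by rwa [div_le_one hp]
  have hAC : ((j:ℝ) - 1) / 2 ^ k ≤ ((j:ℝ) - 1/2) / 2 ^ k := by gcongr; linarith
  have hCB : ((j:ℝ) - 1/2) / 2 ^ k ≤ (j:ℝ) / 2 ^ k := by gcongr; linarith
  have eA : 2 ^ k * (((j:ℝ) - 1) / 2 ^ k) = j - 1 := by field_simp
  have eC : 2 ^ k * (((j:ℝ) - 1/2) / 2 ^ k) = j - 1/2 := by field_simp
  have eB : 2 ^ k * ((j:ℝ) / 2 ^ k) = j := by field_simp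
  unfold Xfn haarCoeff
  have key : ∀ x, chiStep t x * haarFn k j x
      = 2 * (Ico (((j:ℝ) - 1) / 2 ^ k) (min t (((j:ℝ) - 1/2) / 2 ^ k))).indicator (fun _ => (1:ℝ)) x
      - (Ico (((j:ℝ) - 1) / 2 ^ k) (((j:ℝ) - 1/2) / 2 ^ k)).indicator (fun _ => (1:ℝ)) x
      - 2 * (Ico (((j:ℝ) - 1/2) / 2 ^ k) (max t (((j:ℝ) - 1/2) / 2 ^ k))).indicator
          (fun _ => (1:ℝ)) x
      + (Ico (((j:ℝ) - 1/2) / 2 ^ k) ((j:ℝ) / 2 ^ k)).indicator (fun _ => (1:ℝ)) x := by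
    intro x
    unfold chiStep haarFn
    generalize ((j:ℝ) - 1) / 2 ^ k = A at *
    generalize ((j:ℝ) - 1/2) / 2 ^ k = C at *
    generalize (j:ℝ) / 2 ^ k = B at *
    simp only [indicator, mem_Ico, lt_min_iff, lt_max_iff]
    grind
  simp_rw [key]
  have I := intervalIntegrable_indicator_Ico_one
  rw [intervalIntegral.integral_add
      ((((I _ _).const_mul 2).sub (I _ _)).sub ((I _ _).const_mul 2)) (I _ _),
    intervalIntegral.integral_sub
      (((I _ _).const_mul 2).sub (I _ _)) ((I _ _).const_mul 2),
    intervalIntegral.integral_sub ((I _ _).const_mul 2) (I _ _),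
    intervalIntegral.integral_const_mul, intervalIntegral.integral_const_mul,
    integral_indicator_Ico_one hA (le_min ht1 hAC) ((min_le_left _ _).trans (ht2.trans hB)),
    integral_indicator_Ico_one hA hAC (hCB.trans hB),
    integral_indicator_Ico_one (hA.trans hAC) (le_max_right _ _)
      (max_le (ht2.trans hB) (hCB.trans hB)),
    integral_indicator_Ico_one (hA.trans hAC) hCB hB]
  rcases le_total t (((j:ℝ) - 1/2) / 2 ^ k) with h | h
  · rw [min_eq_left h, max_eq_right h]
    have := mul_le_mul_of_nonneg_left h hp.le
    rw [abs_of_nonpos (by linarith)]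
    linarith
  · rw [min_eq_right h, max_eq_left h]
    have := mul_le_mul_of_nonneg_left h hp.le
    rw [abs_of_nonneg (by linarith)]
    linarith

lemma Zfn_eq {k j : ℕ} (h1 : 1 ≤ j) (hj : j ≤ 2 ^ k) (t : ℝ) :
    Zfn k j t = 2 ^ k * Real.sqrt 12 * profileFn (2 ^ k * t - (j - 1)) := by
  have hp : (0:ℝ) < 2 ^ k := by positivity
  unfold Zfn profileFn
  by_cases h : ((j:ℝ) - 1) / 2 ^ k ≤ t ∧ t ≤ (j:ℝ) / 2 ^ k
  · rw [if_pos h, Xfn_eq h1 hj h.1 h.2, indicator_of_mem]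
    · ring
    · obtain ⟨ha, hb⟩ := h
      rw [div_le_iff₀ hp] at ha
      rw [le_div_iff₀ hp] at hb
      constructor <;> linarith
  · rw [if_neg h, indicator_of_notMem, mul_zero]
    rintro ⟨ha, hb⟩
    refine h ⟨?_, ?_⟩
    · rw [div_le_iff₀ hp]; linarith
    · rw [le_div_iff₀ hp]; linarith

lemma abs_profileFn_le (s : ℝ) : |profileFn s| ≤ 1 := by
  unfold profileFn indicator
  split_ifs with h
  · obtain ⟨h0, h1⟩ := h
    rw [abs_le]
    rcases abs_cases (2 * s - 1) with h | h <;> constructor <;> linarith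
  · simp

lemma measurable_profileFn : Measurable profileFn :=
  Measurable.indicator (by fun_prop) measurableSet_Icc

lemma intervalIntegrable_Zfn_mul {k j k' j' : ℕ} (h1 : 1 ≤ j) (hj : j ≤ 2 ^ k)
    (h1' : 1 ≤ j') (hj' : j' ≤ 2 ^ k') :
    IntervalIntegrable (fun t => Zfn k j t * Zfn k' j' t) volume 0 1 := by
  simp_rw [Zfn_eq h1 hj, Zfn_eq h1' hj']
  have m := measurable_profileFn
  rw [intervalIntegrable_iff, uIoc_of_le zero_le_one]
  refine Integrable.of_bound (Measurable.aestronglyMeasurable (by fun_prop))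
    ((2 ^ k * √12) * (2 ^ k' * √12)) (.of_forall fun t => ?_)
  rw [Real.norm_eq_abs, abs_mul, abs_mul (2 ^ k * √12), abs_mul (2 ^ k' * √12),
    abs_of_nonneg (by positivity : 0 ≤ 2 ^ k * √12),
    abs_of_nonneg (by positivity : 0 ≤ 2 ^ k' * √12)]
  exact mul_le_mul (mul_le_of_le_one_right (by positivity) (abs_profileFn_le _))
    (mul_le_of_le_one_right (by positivity) (abs_profileFn_le _)) (by positivity) (by positivity)

/-- Pairing against `Z_{k,j}` only sees its dyadic interval, which is rescaled to `[0,1]`. -/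
lemma integral_mul_Zfn {k j : ℕ} (h1 : 1 ≤ j) (hj : j ≤ 2 ^ k) (g : ℝ → ℝ) :
    ∫ t in (0:ℝ)..1, g t * Zfn k j t =
      Real.sqrt 12 * ∫ s in (0:ℝ)..1, g ((s + (j - 1)) / 2 ^ k) * (1/2 - |2 * s - 1|) := by
  have hp : (0:ℝ) < 2 ^ k := by positivity
  have h1' : (1:ℝ) ≤ j := by exact_mod_cast h1
  have hj' : (j:ℝ) ≤ 2 ^ k := by exact_mod_cast hj
  set F : ℝ → ℝ := fun s => g ((s + (j - 1)) / 2 ^ k) * profileFn s with hF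
  have e1 : ∀ t, g t * Zfn k j t = 2 ^ k * √12 * F (2 ^ k * t - (j - 1)) := by
    intro t
    rw [Zfn_eq h1 hj]
    simp only [hF]
    rw [sub_add_cancel, mul_div_cancel_left₀ _ hp.ne']
    ring
  simp_rw [e1]
  rw [intervalIntegral.integral_const_mul,
    intervalIntegral.integral_comp_mul_sub F hp.ne', smul_eq_mul]
  have e2 : ∫ x in (2 ^ k * 0 - ((j:ℝ) - 1))..(2 ^ k * 1 - ((j:ℝ) - 1)), F x
      = ∫ s in (0:ℝ)..1, g ((s + (j - 1)) / 2 ^ k) * (1/2 - |2 * s - 1|) := by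
    rw [intervalIntegral.integral_of_le (by linarith),
      intervalIntegral.integral_of_le zero_le_one,
      ← integral_Icc_eq_integral_Ioc, ← integral_Icc_eq_integral_Ioc]
    have : F = (Icc (0:ℝ) 1).indicator
        (fun s => g ((s + (j - 1)) / 2 ^ k) * (1/2 - |2 * s - 1|)) := by
      ext s
      simp only [hF, profileFn, indicator]
      split_ifs <;> simp
    rw [this, setIntegral_indicator measurableSet_Icc,
      inter_eq_right.mpr (Icc_subset_Icc (by linarith) (by linarith))]
  rw [e2, mul_comm (2 ^ k : ℝ), mul_assoc, mul_inv_cancel_left₀ hp.ne']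

/-- The interior of a dyadic interval of length `2^{-(n+1)} ≤ 1/2` contains neither the kink of the
profile at `1/2` nor the ends of its support, so the profile is affine there. The translation by
`m'` only moves the interval. -/
lemma profileFn_affine (n m m' : ℕ) : ∃ a b : ℝ, ∀ s ∈ Ioo (0:ℝ) 1,
    profileFn ((s + m) / 2 ^ (n + 1) - m') = a + b * s := by
  have hH : 0 < 2 ^ n := by positivity
  have hR : (0:ℝ) < 2 ^ n := by positivity
  have hM : (0:ℝ) < 2 * 2 ^ n := by positivity
  have e : (2:ℝ) ^ (n + 1) = 2 * 2 ^ n := by rw [pow_succ]; ring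
  simp only [e]
  rcases lt_or_ge m (m' * (2 * 2 ^ n)) with h | h
  · refine ⟨0, 0, fun s hs => ?_⟩
    have h' : (m:ℝ) + 1 ≤ m' * (2 * 2 ^ n) := by exact_mod_cast h
    have : (s + m) / (2 * 2 ^ n) < m' := by rw [div_lt_iff₀ hM]; linarith [hs.2]
    rw [profileFn, indicator_of_notMem (fun h => by linarith [h.1])]
    simp
  rcases le_or_gt ((m' + 1) * (2 * 2 ^ n)) m with h2 | h2
  · refine ⟨0, 0, fun s hs => ?_⟩
    have h' : ((m':ℝ) + 1) * (2 * 2 ^ n) ≤ m := by exact_mod_cast h2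
    have : (m':ℝ) + 1 < (s + m) / (2 * 2 ^ n) := by rw [lt_div_iff₀ hM]; linarith [hs.1]
    rw [profileFn, indicator_of_notMem (fun h => by linarith [h.2])]
    simp
  have g0 : ∀ s ∈ Ioo (0:ℝ) 1, (m':ℝ) ≤ (s + m) / (2 * 2 ^ n) := by
    intro s hs
    have h' : (m':ℝ) * (2 * 2 ^ n) ≤ m := by exact_mod_cast h
    rw [le_div_iff₀ hM]; linarith [hs.1]
  have g1 : ∀ s ∈ Ioo (0:ℝ) 1, (s + m) / (2 * 2 ^ n) ≤ (m':ℝ) + 1 := by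
    intro s hs
    have h' : (m:ℝ) + 1 ≤ (m' + 1) * (2 * 2 ^ n) := by exact_mod_cast h2
    rw [div_le_iff₀ hM]; linarith [hs.2]
  rcases lt_or_ge m (m' * (2 * 2 ^ n) + 2 ^ n) with h3 | h3
  · refine ⟨-1/2 + 2 * (m / (2 * 2 ^ n) - m'), 2 / (2 * 2 ^ n), fun s hs => ?_⟩
    have h' : (m:ℝ) + 1 ≤ m' * (2 * 2 ^ n) + 2 ^ n := by exact_mod_cast h3
    have : (s + m) / (2 * 2 ^ n) ≤ m' + 1/2 := by rw [div_le_iff₀ hM]; linarith [hs.2]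
    rw [profileFn, indicator_of_mem (mem_Icc.mpr ⟨by linarith [g0 s hs], by linarith [g1 s hs]⟩),
      abs_of_nonpos (by linarith)]
    ring
  · refine ⟨3/2 - 2 * (m / (2 * 2 ^ n) - m'), -2 / (2 * 2 ^ n), fun s hs => ?_⟩
    have h' : (m':ℝ) * (2 * 2 ^ n) + 2 ^ n ≤ m := by exact_mod_cast h3
    have : (m':ℝ) + 1/2 ≤ (s + m) / (2 * 2 ^ n) := by rw [le_div_iff₀ hM]; linarith [hs.1]
    rw [profileFn, indicator_of_mem (mem_Icc.mpr ⟨by linarith [g0 s hs], by linarith [g1 s hs]⟩),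
      abs_of_nonneg (by linarith)]
    ring

lemma integral_congr_Ioo {f g : ℝ → ℝ} (h : ∀ s ∈ Ioo (0:ℝ) 1, f s = g s) :
    ∫ s in (0:ℝ)..1, f s = ∫ s in (0:ℝ)..1, g s := by
  rw [intervalIntegral.integral_of_le zero_le_one, intervalIntegral.integral_of_le zero_le_one,
    integral_Ioc_eq_integral_Ioo, integral_Ioc_eq_integral_Ioo]
  exact setIntegral_congr_fun measurableSet_Ioo h

/-- The absolute value is removed by splitting `[0,1]` at `1/2`. -/
lemma integral_split_abs (p : ℝ → ℝ → ℝ) (hp : Continuous fun s => p s |2 * s - 1|) :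
    ∫ s in (0:ℝ)..1, p s |2 * s - 1| =
      (∫ s in (0:ℝ)..(1/2), p s (1 - 2 * s)) + ∫ s in (1/2:ℝ)..1, p s (2 * s - 1) := by
  rw [← intervalIntegral.integral_add_adjacent_intervals
    (hp.intervalIntegrable 0 (1/2)) (hp.intervalIntegrable (1/2) 1)]
  congr 1
  · refine intervalIntegral.integral_congr fun s hs => ?_
    rw [uIcc_of_le (by norm_num)] at hs
    rw [abs_of_nonpos (by linarith [hs.2])]
    ring_nf
  · refine intervalIntegral.integral_congr fun s hs => ?_
    rw [uIcc_of_le (by norm_num)] at hs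
    rw [abs_of_nonneg (by linarith [hs.1])]

lemma integral_poly2 (a b c x y : ℝ) :
    ∫ s in x..y, (a + b * s + c * s ^ 2) =
      a * (y - x) + b * ((y ^ 2 - x ^ 2) / 2) + c * ((y ^ 3 - x ^ 3) / 3) := by
  rw [intervalIntegral.integral_add (Continuous.intervalIntegrable (by fun_prop) _ _)
      (Continuous.intervalIntegrable (by fun_prop) _ _),
    intervalIntegral.integral_add (Continuous.intervalIntegrable (by fun_prop) _ _)
      (Continuous.intervalIntegrable (by fun_prop) _ _),
    intervalIntegral.integral_const_mul, intervalIntegral.integral_const_mul, integral_id,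
    integral_pow, intervalIntegral.integral_const, smul_eq_mul]
  norm_num
  ring

/-- The profile has mean zero and is symmetric about `1/2`, so it kills affine functions. -/
lemma integral_affine_mul (a b : ℝ) :
    ∫ s in (0:ℝ)..1, (a + b * s) * (1/2 - |2 * s - 1|) = 0 := by
  rw [integral_split_abs (fun s u => (a + b * s) * (1/2 - u)) (by fun_prop)]
  have e1 : ∀ s : ℝ, (a + b * s) * (1/2 - (1 - 2 * s))
      = -a/2 + (2 * a - b/2) * s + (2 * b) * s ^ 2 := fun s => by ring
  have e2 : ∀ s : ℝ, (a + b * s) * (1/2 - (2 * s - 1))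
      = 3*a/2 + (3 * b/2 - 2 * a) * s + (-2 * b) * s ^ 2 := fun s => by ring
  simp_rw [e1, e2]
  rw [integral_poly2, integral_poly2]
  ring

lemma integral_profile_sq :
    ∫ s in (0:ℝ)..1, (1/2 - |2 * s - 1|) * (1/2 - |2 * s - 1|) = 1/12 := by
  rw [integral_split_abs (fun s u => (1/2 - u) * (1/2 - u)) (by fun_prop)]
  have e1 : ∀ s : ℝ, (1/2 - (1 - 2 * s)) * (1/2 - (1 - 2 * s))
      = 1/4 + (-2) * s + 4 * s ^ 2 := fun s => by ring
  have e2 : ∀ s : ℝ, (1/2 - (2 * s - 1)) * (1/2 - (2 * s - 1))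
      = 9/4 + (-6) * s + 4 * s ^ 2 := fun s => by ring
  simp_rw [e1, e2]
  rw [integral_poly2, integral_poly2]
  norm_num

lemma integral_Zfn_mul_of_lt {k j k' j' : ℕ} (h1 : 1 ≤ j) (hj : j ≤ 2 ^ k)
    (h1' : 1 ≤ j') (hj' : j' ≤ 2 ^ k') (hlt : k' < k) :
    ∫ t in (0:ℝ)..1, Zfn k' j' t * Zfn k j t = 0 := by
  rw [integral_mul_Zfn h1 hj]
  obtain ⟨n, rfl⟩ : ∃ n, k = k' + (n + 1) := ⟨k - k' - 1, by omega⟩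
  obtain ⟨a, b, hab⟩ := profileFn_affine n (j - 1) (j' - 1)
  rw [Nat.cast_pred h1, Nat.cast_pred h1'] at hab
  rw [integral_congr_Ioo (g := fun s =>
    (2 ^ k' * √12 * a + 2 ^ k' * √12 * b * s) * (1/2 - |2 * s - 1|)),
    integral_affine_mul, mul_zero]
  intro s hs
  rw [Zfn_eq h1' hj']
  have : (2:ℝ) ^ k' * ((s + (j - 1)) / 2 ^ (k' + (n + 1))) = (s + (j - 1)) / 2 ^ (n + 1) := by
    rw [pow_add]; field_simp
  rw [this, hab s hs]
  ring

lemma integral_Zfn_mul_same {k j j' : ℕ} (h1 : 1 ≤ j) (hj : j ≤ 2 ^ k)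
    (h1' : 1 ≤ j') (hj' : j' ≤ 2 ^ k) :
    ∫ t in (0:ℝ)..1, Zfn k j' t * Zfn k j t = if j' = j then 2 ^ k else 0 := by
  have hp : (0:ℝ) < 2 ^ k := by positivity
  rw [integral_mul_Zfn h1 hj]
  simp_rw [Zfn_eq h1' hj', mul_div_cancel₀ _ hp.ne']
  split_ifs with h
  · subst h
    rw [integral_congr_Ioo (g := fun s =>
      (2 ^ k * √12) * ((1/2 - |2 * s - 1|) * (1/2 - |2 * s - 1|))),
      intervalIntegral.integral_const_mul, integral_profile_sq]
    · have := Real.mul_self_sqrt (show (0:ℝ) ≤ 12 by norm_num)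
      linear_combination (2 ^ k / 12) * this
    · intro s hs
      rw [add_sub_cancel_right, profileFn, indicator_of_mem (mem_Icc.mpr ⟨hs.1.le, hs.2.le⟩)]
      ring
  · rw [integral_congr_Ioo (g := fun s => 0)]
    · simp
    · intro s hs
      rw [profileFn, indicator_of_notMem]
      · simp
      · rintro ⟨ha, hb⟩
        rcases lt_or_gt_of_ne h with h | h
        · have : (j':ℝ) + 1 ≤ j := by exact_mod_cast h
          linarith [hs.1]
        · have : (j:ℝ) + 1 ≤ j' := by exact_mod_cast h
          linarith [hs.2]

/-- The Gram matrix of the `Z_{k,j}` is diagonal. -/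
lemma integral_Zfn_mul {k j k' j' : ℕ} (h1 : 1 ≤ j) (hj : j ≤ 2 ^ k)
    (h1' : 1 ≤ j') (hj' : j' ≤ 2 ^ k') :
    ∫ t in (0:ℝ)..1, Zfn k j t * Zfn k' j' t
      = if (⟨k, j⟩ : (_ : ℕ) × ℕ) = ⟨k', j'⟩ then 2 ^ k else 0 := by
  rcases lt_trichotomy k k' with h | rfl | h
  · rw [integral_Zfn_mul_of_lt h1' hj' h1 hj h, if_neg (by simp [h.ne])]
  · rw [integral_Zfn_mul_same h1' hj' h1 hj]
    simp
  · simp_rw [mul_comm (Zfn k j _)]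
    rw [integral_Zfn_mul_of_lt h1 hj h1' hj' h, if_neg (by simp [h.ne'])]

theorem Zfn_isotropic (k₀ k₁ : ℕ) (hk : k₀ ≤ k₁) (v : ℕ → ℕ → ℝ) :
    ∫ t in (0:ℝ)..1, (innerW k₀ k₁ v (fun k j => Zfn k j t)) ^ 2 =
      innerW k₀ k₁ v v := by
  set S : Finset ((_ : ℕ) × ℕ) := (Finset.Icc k₀ k₁).sigma fun k => Finset.Icc 1 (2 ^ k) with hS
  have flat : ∀ y : ℕ → ℕ → ℝ,
      innerW k₀ k₁ v y = ∑ p ∈ S, ((2:ℝ) ^ p.1)⁻¹ * v p.1 p.2 * y p.1 p.2 := by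
    intro y
    simp only [innerW, hS, Finset.sum_sigma, Finset.mul_sum, mul_assoc]
  have hmem : ∀ p ∈ S, 1 ≤ p.2 ∧ p.2 ≤ 2 ^ p.1 := fun p hp =>
    Finset.mem_Icc.mp (Finset.mem_sigma.mp hp).2
  have expand : ∀ t, (innerW k₀ k₁ v (fun k j => Zfn k j t)) ^ 2 =
      ∑ p ∈ S, ∑ q ∈ S, (((2:ℝ) ^ p.1)⁻¹ * v p.1 p.2 * (((2:ℝ) ^ q.1)⁻¹ * v q.1 q.2)) *
        (Zfn p.1 p.2 t * Zfn q.1 q.2 t) := by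
    intro t
    rw [flat, sq, Finset.sum_mul_sum]
    exact Finset.sum_congr rfl fun p _ => Finset.sum_congr rfl fun q _ => by ring
  have hint : ∀ p ∈ S, ∀ q ∈ S, IntervalIntegrable (fun t =>
      (((2:ℝ) ^ p.1)⁻¹ * v p.1 p.2 * (((2:ℝ) ^ q.1)⁻¹ * v q.1 q.2)) *
        (Zfn p.1 p.2 t * Zfn q.1 q.2 t)) volume 0 1 := fun p hp q hq =>
    (intervalIntegrable_Zfn_mul (hmem p hp).1 (hmem p hp).2 (hmem q hq).1 (hmem q hq).2).const_mul _
  simp_rw [expand]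
  rw [intervalIntegral.integral_finsetSum
    (fun p hp => by
      simpa only [Finset.sum_fn] using IntervalIntegrable.sum S (fun q hq => hint p hp q hq)), flat]
  refine Finset.sum_congr rfl fun p hp => ?_
  rw [intervalIntegral.integral_finsetSum (fun q hq => hint p hp q hq), Finset.sum_eq_single p]
  · rw [intervalIntegral.integral_const_mul,
      integral_Zfn_mul (hmem p hp).1 (hmem p hp).2 (hmem p hp).1 (hmem p hp).2, if_pos rfl]
    field_simp
  · intro q hq hne
    rw [intervalIntegral.integral_const_mul,
      integral_Zfn_mul (hmem p hp).1 (hmem p hp).2 (hmem q hq).1 (hmem q hq).2,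
      if_neg (fun h => hne h.symm), mul_zero]
  · exact fun h => absurd hp h
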